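/- Suppose F satisfies (G1) and (G2). Then for every positive measure μ ∈ L_θ^+ with a disintegration ω, and for the path Γ^ω_{F^{*n}μ} representing F^{*n}μ obtained by iterating the transfer formula starting from ω, it holds for all n ≥ 1 that |Γ^ω_{F^{*n}μ}|_θ^ω ≤ θ^n |μ|_θ^ω + (C₁/(1−θ)) ‖μ‖_∞, where C₁ = max{Hθ + θN|g|_θ, 2}. Consequently, taking the infimum over disintegrations, |F^{*n}μ|_θ ≤ θ^n |μ|_θ + (C₁/(1−θ)) ‖μ‖_∞ for all n ≥ 1. -/

import Mathlib

open MeasureTheory ENNReal Set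

namespace RDS

/-- The one-sided subshift of finite type `Σ_A^+` determined by the 0-1 matrix `A`. -/
abbrev SigmaA (N : ℕ) (A : Fin N → Fin N → Bool) :=
  {x : ℕ → Fin N // ∀ i, A (x i) (x (i + 1)) = true}

variable {N : ℕ} {A : Fin N → Fin N → Bool}

/-- The shift map `σ` on `Σ_A^+`. -/
def shift (x : SigmaA N A) : SigmaA N A :=
  ⟨fun i => x.val (i + 1), fun i => x.prop (i + 1)⟩

/-- Aperiodicity of a 0-1 matrix: some power has all entries positive. -/
def Aperiodic (A : Fin N → Fin N → Bool) : Prop :=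
  ∃ k : ℕ, 0 < k ∧ ∀ i j,
    0 < ((Matrix.of fun a b => if A a b then (1 : ℕ) else 0) ^ k) i j

/-- The metric `d_θ(x,y) = Σ_i θ^i (1 - δ(x_i, y_i))` on `Σ_A^+`. -/
noncomputable def dTheta (θ : ℝ) (x y : SigmaA N A) : ℝ :=
  ∑' i : ℕ, θ ^ i * (if x.val i = y.val i then (0 : ℝ) else 1)

/-- Cylinder sets of `Σ_A^+`. -/
def cylinder (n : ℕ) (w : Fin (n + 1) → Fin N) : Set (SigmaA N A) :=
  {x | ∀ i : Fin (n + 1), x.val i = w i}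

/-- `m` is a Markov measure on `Σ_A^+` compatible with `A`: it is given on
cylinders by a stochastic matrix `P` (vanishing where `A` vanishes) and a
stationary probability vector `p`. -/
def IsMarkov (m : Measure (SigmaA N A)) : Prop :=
  ∃ (p : Fin N → ℝ≥0∞) (P : Fin N → Fin N → ℝ≥0∞),
    (∑ i, p i = 1) ∧ (∀ i, ∑ j, P i j = 1) ∧ (∀ j, ∑ i, p i * P i j = p j) ∧
    (∀ i j, A i j = false → P i j = 0) ∧
    ∀ (n : ℕ) (w : Fin (n + 1) → Fin N),
      m (cylinder n w) = p (w 0) * ∏ i : Fin n, P (w i.castSucc) (w i.succ)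

/-- `σ_i⁻¹(γ)`: the sequence `γ` with the symbol `i` prepended
(defined when `A i γ₀ = 1`), i.e. the inverse branch of the restriction `σ_i`
of `σ` to the cylinder `[i]`. -/
def prepend (i : Fin N) (x : SigmaA N A) (h : A i (x.val 0) = true) : SigmaA N A :=
  ⟨fun n => match n with
    | 0 => i
    | Nat.succ k => x.val k,
   fun j => match j with
    | 0 => h
    | Nat.succ k => x.prop k⟩

/-- `f` is `L`-Lipschitz with respect to the distance function `d`. -/
def LipWithD {X : Type*} (d : X → X → ℝ) (L : ℝ) (f : X → ℝ) : Prop :=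
  ∀ x y, |f x - f y| ≤ L * d x y

/-- `f` is Lipschitz with respect to the distance function `d`. -/
def LipD {X : Type*} (d : X → X → ℝ) (f : X → ℝ) : Prop :=
  ∃ L : ℝ, LipWithD d L f

/-- The best Lipschitz constant of `f` with respect to `d` (valued in `ℝ≥0∞`). -/
noncomputable def lipConst {X : Type*} (d : X → X → ℝ) (f : X → ℝ) : ℝ≥0∞ :=
  ⨆ (x : X) (y : X), ENNReal.ofReal (|f x - f y| / d x y)

/-- The sup norm of `f` (valued in `ℝ≥0∞`). -/
noncomputable def supNormE {X : Type*} (f : X → ℝ) : ℝ≥0∞ :=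
  ⨆ x : X, ENNReal.ofReal |f x|

/-- The norm `‖f‖_θ = ‖f‖_∞ + Lip_d(f)`. -/
noncomputable def thetaNorm {X : Type*} (d : X → X → ℝ) (f : X → ℝ) : ℝ≥0∞ :=
  supNormE f + lipConst d f

/-- The Perron-Frobenius operator duality characterizing `P_σ`:
`∫ P_σ(φ) · ψ dm = ∫ φ · (ψ ∘ σ) dm` for integrable `φ` and bounded measurable `ψ`. -/
def IsPerronFrobenius (m : Measure (SigmaA N A))
    (Pσ : (SigmaA N A → ℝ) → SigmaA N A → ℝ) : Prop :=
  ∀ φ ψ : SigmaA N A → ℝ, Integrable φ m → Measurable ψ → (∃ C, ∀ x, |ψ x| ≤ C) →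
    ∫ x, Pσ φ x * ψ x ∂m = ∫ x, φ x * ψ (shift x) ∂m

/-- Spectral gap for `P_σ` on `d_θ`-Lipschitz functions with constants `D`, `r`:
`‖P_σ^n φ‖_θ ≤ D r^n ‖φ‖_θ` for all `n` and all `d_θ`-Lipschitz `φ` with
`∫ φ dm = 0`. -/
def HasGap (m : Measure (SigmaA N A)) (θ : ℝ)
    (Pσ : (SigmaA N A → ℝ) → SigmaA N A → ℝ) (D r : ℝ) : Prop :=
  ∀ φ : SigmaA N A → ℝ, LipD (dTheta θ) φ → (∫ x, φ x ∂m) = 0 →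
    ∀ n : ℕ, thetaNorm (dTheta θ) (Pσ^[n] φ) ≤
      ENNReal.ofReal (D * r ^ n) * thetaNorm (dTheta θ) φ

/-- `Jm i` is the Jacobian `J_{m,σ_i}` of `m` with respect to the branch `σ_i`
(the restriction of `σ` to the cylinder `[i]`): `m (σ_i(E)) = ∫_E J_{m,σ_i} dm`
for every measurable `E` (intersected with `[i]`). -/
def IsJacobian (m : Measure (SigmaA N A)) (Jm : Fin N → SigmaA N A → ℝ) : Prop :=
  ∀ (i : Fin N) (E : Set (SigmaA N A)), MeasurableSet E →
    m {γ : SigmaA N A | ∃ h : A i (γ.val 0) = true, prepend i γ h ∈ E} =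
      ∫⁻ x in E ∩ {x : SigmaA N A | x.val 0 = i}, ENNReal.ofReal (Jm i x) ∂m

variable {K : Type*} [MetricSpace K] [MeasurableSpace K]

/-- The Wasserstein-Kantorovich like distance `W(ν₁,ν₂)`: the supremum of
`|∫ g dν₁ - ∫ g dν₂|` over `g : K → ℝ` with `Lip(g) ≤ 1` and `‖g‖_∞ ≤ 1`.
Applied with `ν₂ = 0` it gives the norm `‖ν₁‖_W`; applied to the two parts of a
decomposition of a signed measure it gives its `‖·‖_W` norm. -/
noncomputable def wDist (ν₁ ν₂ : Measure K) : ℝ≥0∞ :=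
  ⨆ g : {g : K → ℝ // LipschitzWith 1 g ∧ ∀ z, |g z| ≤ 1},
    ENNReal.ofReal |∫ z, g.val z ∂ν₁ - ∫ z, g.val z ∂ν₂|

/-- The skew product `F(x,z) = (σ(x), G(x,z))`. -/
def skew (G : SigmaA N A × K → K) (p : SigmaA N A × K) : SigmaA N A × K :=
  (shift p.1, G p)

/-- The transfer operator `F^* μ (E) = μ (F⁻¹ E)` acting on signed measures. -/
noncomputable def transfer (G : SigmaA N A × K → K)
    (μ : SignedMeasure (SigmaA N A × K)) : SignedMeasure (SigmaA N A × K) :=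
  μ.map (skew G)

/-- Condition (G1): uniform contraction of the vertical fibers with rate `α`. -/
def CondG1 (G : SigmaA N A × K → K) (α : ℝ) : Prop :=
  ∀ (x : SigmaA N A) (z₁ z₂ : K), dist (G (x, z₁)) (G (x, z₂)) ≤ α * dist z₁ z₂

/-- Condition (G2): `x ↦ G(x,z)` is `d_θ`-Lipschitz with constant `H`,
uniformly in `z`. -/
def CondG2 (θ : ℝ) (G : SigmaA N A × K → K) (H : ℝ) : Prop :=
  ∀ (z : K) (x y : SigmaA N A), dist (G (x, z)) (G (y, z)) ≤ H * dTheta θ x y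

/-- `T` is (the path `γ ↦ μ|_γ` of) a disintegration of `μ` along the vertical
fibers, over the reference measure `m`: `μ(E) = ∫ (μ|_γ)(E ∩ γ) dm(γ)`. -/
def IsDisint (m : Measure (SigmaA N A)) (μ : Measure (SigmaA N A × K))
    (T : SigmaA N A → Measure K) : Prop :=
  (∀ E : Set (SigmaA N A × K), MeasurableSet E →
      μ E = ∫⁻ γ, T γ {z | (γ, z) ∈ E} ∂m) ∧
  ∀ E : Set K, MeasurableSet E → Measurable fun γ => T γ E

/-- The (essential) `‖·‖_W`-Lipschitz constant of a path of measures,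
`|Γ|_θ^ω = ess sup_{γ₁ ≠ γ₂} ‖Γ(γ₁) - Γ(γ₂)‖_W / d_θ(γ₁,γ₂)`. -/
noncomputable def pathLip (m : Measure (SigmaA N A)) (θ : ℝ)
    (T : SigmaA N A → Measure K) : ℝ≥0∞ :=
  essSup (fun p : SigmaA N A × SigmaA N A =>
    wDist (T p.1) (T p.2) / ENNReal.ofReal (dTheta θ p.1 p.2)) (m.prod m)

/-- The Lipschitz constant `|μ|_θ` of a positive measure: the infimum over
disintegrations `ω` of `μ` of `|μ|_θ^ω`. -/
noncomputable def lipDisint (m : Measure (SigmaA N A)) (θ : ℝ)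
    (μ : Measure (SigmaA N A × K)) : ℝ≥0∞ :=
  ⨅ T : {T : SigmaA N A → Measure K // IsDisint m μ T}, pathLip m θ T.val

/-- The fiberwise transfer formula: the path representing `F^*μ` induced by the
path `T` representing `μ`, i.e.
`γ ↦ Σ_i 1_{σ([i])}(γ) (F_{iγ})_*(T(iγ)) / J_{m,σ_i}(iγ)`. -/
noncomputable def transferPath (G : SigmaA N A × K → K) (Jm : Fin N → SigmaA N A → ℝ)
    (T : SigmaA N A → Measure K) : SigmaA N A → Measure K :=
  fun γ => ∑ i : Fin N, if h : A i (γ.val 0) = true then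
      ENNReal.ofReal ((Jm i (prepend i γ h))⁻¹) •
        ((T (prepend i γ h)).map fun z => G (prepend i γ h, z))
    else 0

variable [BorelSpace K] [CompactSpace K] [Nonempty K]

/-- The fiberwise restriction `μ|_γ = π₂_* (φ₁(γ) μ_γ)` of a finite positive
measure `μ` on `Σ_A^+ × K`, where `({μ_γ}_γ, φ₁ m)` is the Rokhlin
disintegration of `μ` along the vertical fibers and `φ₁ = d(π₁_*μ)/dm`. -/
noncomputable def fiberR (m : Measure (SigmaA N A))
    (μ : Measure (SigmaA N A × K)) (γ : SigmaA N A) : Measure K := by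
  by_cases h : IsFiniteMeasure μ
  · haveI := h
    exact (μ.fst.rnDeriv m γ) • μ.condKernel γ
  · exact 0

/-- The norm `‖μ‖_∞ = ess sup_γ ‖μ|_γ‖_W` of a signed measure written as a
difference `μ = μ₁ - μ₂` of positive measures. -/
noncomputable def infNormPair (m : Measure (SigmaA N A))
    (μ₁ μ₂ : Measure (SigmaA N A × K)) : ℝ≥0∞ :=
  essSup (fun γ => wDist (fiberR m μ₁ γ) (fiberR m μ₂ γ)) m

/-- The marginal density `φ₁ = d(π₁_*μ)/dm` of the signed measure `μ = μ₁ - μ₂`. -/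
noncomputable def phiPair (m : Measure (SigmaA N A))
    (μ₁ μ₂ : Measure (SigmaA N A × K)) (γ : SigmaA N A) : ℝ :=
  (μ₁.fst.rnDeriv m γ).toReal - (μ₂.fst.rnDeriv m γ).toReal

/-- Membership in `AB`: both parts are finite with first marginal absolutely
continuous with respect to `m`. -/
def MemABPair (m : Measure (SigmaA N A)) (μ₁ μ₂ : Measure (SigmaA N A × K)) : Prop :=
  μ₁.fst ≪ m ∧ μ₂.fst ≪ m ∧ IsFiniteMeasure μ₁ ∧ IsFiniteMeasure μ₂

/-- Membership in `S^∞`: `μ ∈ AB`, `‖μ‖_∞ < ∞` and the marginal density `φ₁`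
has a `d_θ`-Lipschitz version. -/
def MemSPair (m : Measure (SigmaA N A)) (θ : ℝ)
    (μ₁ μ₂ : Measure (SigmaA N A × K)) : Prop :=
  MemABPair m μ₁ μ₂ ∧ infNormPair m μ₁ μ₂ < ⊤ ∧
    ∃ ψ : SigmaA N A → ℝ, ψ =ᵐ[m] phiPair m μ₁ μ₂ ∧ LipD (dTheta θ) ψ

/-- `‖φ₁‖_θ`, computed on the best version of the marginal density. -/
noncomputable def thetaNormMu (m : Measure (SigmaA N A)) (θ : ℝ)
    (μ₁ μ₂ : Measure (SigmaA N A × K)) : ℝ≥0∞ :=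
  ⨅ ψ : {ψ : SigmaA N A → ℝ // ψ =ᵐ[m] phiPair m μ₁ μ₂}, thetaNorm (dTheta θ) ψ.val

/-- The norm `‖μ‖_{S^∞} = ‖φ₁‖_θ + ‖μ‖_∞`. -/
noncomputable def sNormPair (m : Measure (SigmaA N A)) (θ : ℝ)
    (μ₁ μ₂ : Measure (SigmaA N A × K)) : ℝ≥0∞ :=
  thetaNormMu m θ μ₁ μ₂ + infNormPair m μ₁ μ₂

/-- Positive part of a signed measure. -/
noncomputable def jPos {X : Type*} [MeasurableSpace X] (μ : SignedMeasure X) : Measure X :=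
  μ.toJordanDecomposition.posPart

/-- Negative part of a signed measure. -/
noncomputable def jNeg {X : Type*} [MeasurableSpace X] (μ : SignedMeasure X) : Measure X :=
  μ.toJordanDecomposition.negPart

/-- Membership in `AB` for signed measures. -/
def MemAB (m : Measure (SigmaA N A)) (μ : SignedMeasure (SigmaA N A × K)) : Prop :=
  MemABPair m (jPos μ) (jNeg μ)

/-- Membership in `S^∞` for signed measures. -/
def MemS (m : Measure (SigmaA N A)) (θ : ℝ) (μ : SignedMeasure (SigmaA N A × K)) : Prop :=
  MemSPair m θ (jPos μ) (jNeg μ)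

/-- `‖μ‖_∞` for signed measures. -/
noncomputable def infNorm (m : Measure (SigmaA N A))
    (μ : SignedMeasure (SigmaA N A × K)) : ℝ≥0∞ :=
  infNormPair m (jPos μ) (jNeg μ)

/-- `‖μ‖_{S^∞}` for signed measures. -/
noncomputable def sNorm (m : Measure (SigmaA N A)) (θ : ℝ)
    (μ : SignedMeasure (SigmaA N A × K)) : ℝ≥0∞ :=
  sNormPair m θ (jPos μ) (jNeg μ)

/-- `‖φ₁‖_∞` of the marginal density of a signed measure. -/
noncomputable def phiSup (m : Measure (SigmaA N A))
    (μ : SignedMeasure (SigmaA N A × K)) : ℝ≥0∞ :=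
  essSup (fun γ => ENNReal.ofReal |phiPair m (jPos μ) (jNeg μ) γ|) m

lemma dTheta_summable {θ : ℝ} (h0 : 0 < θ) (h1 : θ < 1) (x y : SigmaA N A) :
    Summable fun i : ℕ => θ ^ i * (if x.val i = y.val i then (0 : ℝ) else 1) := by
  refine Summable.of_nonneg_of_le (fun i => ?_) (fun i => ?_)
    (summable_geometric_of_lt_one h0.le h1)
  · split_ifs <;> positivity
  · split_ifs
    · simp; positivity
    · simp

lemma dTheta_nonneg {θ : ℝ} (h0 : 0 < θ) (x y : SigmaA N A) : 0 ≤ dTheta θ x y :=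
  tsum_nonneg fun i => by split_ifs <;> positivity

lemma dTheta_self (θ : ℝ) (x : SigmaA N A) : dTheta θ x x = 0 := by
  simp [dTheta]

lemma dTheta_pos {θ : ℝ} (h0 : 0 < θ) (h1 : θ < 1) {x y : SigmaA N A} (h : x ≠ y) :
    0 < dTheta θ x y := by
  obtain ⟨i, hi⟩ : ∃ i, x.val i ≠ y.val i := by
    by_contra hc
    push Not at hc
    exact h (Subtype.ext (funext hc))
  refine (dTheta_summable h0 h1 x y).tsum_pos (fun i => ?_) i ?_
  · split_ifs <;> positivity
  · simp [hi]; positivity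

lemma dTheta_ge_one {θ : ℝ} (h0 : 0 < θ) (h1 : θ < 1) {x y : SigmaA N A}
    (h : x.val 0 ≠ y.val 0) : 1 ≤ dTheta θ x y := by
  have := (dTheta_summable h0 h1 x y).le_tsum 0 (fun i _ => by split_ifs <;> positivity)
  rw [pow_zero, one_mul, if_neg h] at this
  exact this

lemma dTheta_prepend {θ : ℝ} (h0 : 0 < θ) (h1 : θ < 1) (i : Fin N) (x y : SigmaA N A)
    (hx : A i (x.val 0) = true) (hy : A i (y.val 0) = true) :
    dTheta θ (prepend i x hx) (prepend i y hy) = θ * dTheta θ x y := by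
  unfold dTheta
  rw [(dTheta_summable h0 h1 _ _).tsum_eq_zero_add, ← tsum_mul_left]
  simp only [prepend, if_true, mul_zero, zero_add]
  refine tsum_congr fun n => ?_
  rw [pow_succ', mul_assoc]; rfl

lemma lip_continuous {θ : ℝ} (h0 : 0 < θ) (h1 : θ < 1) {L : ℝ} {f : SigmaA N A → ℝ}
    (hf : LipWithD (dTheta θ) L f) : Continuous f := by
  refine continuous_iff_continuousAt.2 fun x => ?_
  have hc : Continuous fun y : SigmaA N A => dTheta θ y x := by
    refine continuous_tsum (u := fun i => θ ^ i) (fun i => ?_)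
      (summable_geometric_of_lt_one h0.le h1) (fun i y => ?_)
    · have h2 : Continuous fun a : Fin N => θ ^ i * (if a = x.val i then (0 : ℝ) else 1) :=
        continuous_of_discreteTopology
      exact h2.comp ((continuous_apply i).comp continuous_subtype_val)
    · split_ifs
      · simp; positivity
      · simp [abs_of_pos h0]
  have h2 := (hc.const_mul L).tendsto x
  simp only [dTheta_self, mul_zero] at h2
  refine tendsto_iff_dist_tendsto_zero.2 (squeeze_zero (fun _ => dist_nonneg) (fun y => ?_) h2)
  rw [Real.dist_eq]
  exact hf y x

lemma measurable_val (n : ℕ) : Measurable fun x : SigmaA N A => x.val n :=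
  (measurable_pi_apply n).comp measurable_subtype_coe

lemma lip_measurable {θ : ℝ} (h0 : 0 < θ) (h1 : θ < 1) {L : ℝ} {f : SigmaA N A → ℝ}
    (hf : LipWithD (dTheta θ) L f) : Measurable f :=
  (lip_continuous h0 h1 hf).measurable

lemma measurable_shift : Measurable (shift : SigmaA N A → SigmaA N A) :=
  Measurable.subtype_mk (measurable_pi_iff.2 fun n => measurable_val (n + 1))

open Classical in
/-- Total version of `prepend`. -/
noncomputable def prep (i : Fin N) (x : SigmaA N A) : SigmaA N A :=
  if h : A i (x.val 0) = true then prepend i x h else x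

/-- The domain of `prepend i`. -/
def dom (A : Fin N → Fin N → Bool) (i : Fin N) : Set (SigmaA N A) := {x | A i (x.val 0) = true}

lemma prep_of_mem (i : Fin N) (x : SigmaA N A) (h : A i (x.val 0) = true) :
    prep i x = prepend i x h := by simp [prep, h]

lemma shift_prepend (i : Fin N) (x : SigmaA N A) (h : A i (x.val 0) = true) :
    shift (prepend i x h) = x := rfl

lemma prepend_shift (x : SigmaA N A) (h) :
    prepend (x.val 0) (shift x) h = x := by
  apply Subtype.ext; funext n
  cases n <;> rfl

lemma measurableSet_dom (i : Fin N) : MeasurableSet (dom A i) :=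
  measurable_val 0 (MeasurableSet.of_discrete (s := {a : Fin N | A i a = true}))

lemma measurable_prep (i : Fin N) : Measurable (prep i : SigmaA N A → SigmaA N A) := by
  classical
  have : (prep i : SigmaA N A → SigmaA N A) = fun x => ⟨(prep i x).val, (prep i x).prop⟩ := rfl
  rw [this]
  refine Measurable.subtype_mk (measurable_pi_iff.2 fun n => ?_)
  cases n with
  | zero =>
    have : (fun x : SigmaA N A => (prep i x).val 0)
        = fun x => if x ∈ dom A i then i else x.val 0 := by
      funext x; by_cases h : A i (x.val 0) = true <;> simp [prep, dom, h, prepend]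
    rw [this]
    exact Measurable.ite (measurableSet_dom i) measurable_const (measurable_val 0)
  | succ n =>
    have : (fun x : SigmaA N A => (prep i x).val (n+1))
        = fun x => if x ∈ dom A i then x.val n else x.val (n+1) := by
      funext x; by_cases h : A i (x.val 0) = true <;> simp [prep, dom, h, prepend]
    rw [this]
    exact Measurable.ite (measurableSet_dom i) (measurable_val n) (measurable_val (n+1))

/-- The basic change of variables for the inverse branch. -/
lemma map_prep {m : Measure (SigmaA N A)} {Jm : Fin N → SigmaA N A → ℝ} (hJ : IsJacobian m Jm)
    (i : Fin N) :
    (m.restrict (dom A i)).map (prep i) =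
      (m.restrict {x : SigmaA N A | x.val 0 = i}).withDensity
        (fun x => ENNReal.ofReal (Jm i x)) := by
  ext E hE
  rw [Measure.map_apply (measurable_prep i) hE, withDensity_apply _ hE,
    Measure.restrict_restrict hE, ← hJ i E hE,
    Measure.restrict_apply (measurable_prep i hE)]
  congr 1
  ext x
  constructor
  · rintro ⟨h1, h2⟩
    have h2' : A i (x.val 0) = true := h2
    refine ⟨h2', ?_⟩
    rwa [← prep_of_mem]
  · rintro ⟨h, h2⟩
    refine ⟨?_, h⟩
    rwa [Set.mem_preimage, prep_of_mem _ _ h]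

lemma qmp_prep {m : Measure (SigmaA N A)} {Jm : Fin N → SigmaA N A → ℝ} (hJ : IsJacobian m Jm)
    (i : Fin N) : Measure.QuasiMeasurePreserving (prep i) (m.restrict (dom A i)) m := by
  refine ⟨measurable_prep i, ?_⟩
  rw [map_prep hJ]
  exact (withDensity_absolutelyContinuous _ _).trans Measure.restrict_le_self.absolutelyContinuous

lemma measurableSet_cyl (i : Fin N) : MeasurableSet {x : SigmaA N A | x.val 0 = i} :=
  measurable_val 0 (measurableSet_singleton i)

lemma jac_pos {m : Measure (SigmaA N A)} (hminv : m.map shift = m)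
    {Jm : Fin N → SigmaA N A → ℝ} (hJ : IsJacobian m Jm)
    (i : Fin N) (hm : Measurable (Jm i)) :
    ∀ᵐ x ∂(m.restrict {x : SigmaA N A | x.val 0 = i}), 0 < Jm i x := by
  have hE : MeasurableSet {x : SigmaA N A | Jm i x ≤ 0} := hm measurableSet_Iic
  rw [ae_iff]
  simp only [not_lt]
  rw [Measure.restrict_apply hE]
  set E := {x : SigmaA N A | Jm i x ≤ 0}
  have h1 := hJ i E hE
  have h2 : ∫⁻ x in E ∩ {x : SigmaA N A | x.val 0 = i}, ENNReal.ofReal (Jm i x) ∂m = 0 := by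
    rw [setLIntegral_congr_fun (g := fun _ => 0) (hE.inter (measurableSet_cyl i))]
    · simp
    · intro x hx
      exact ENNReal.ofReal_of_nonpos hx.1
  rw [h2] at h1
  have hB : MeasurableSet {γ : SigmaA N A | ∃ h : A i (γ.val 0) = true, prepend i γ h ∈ E} := by
    have : {γ : SigmaA N A | ∃ h : A i (γ.val 0) = true, prepend i γ h ∈ E}
        = dom A i ∩ prep i ⁻¹' E := by
      ext x
      constructor
      · rintro ⟨h, h2⟩
        refine ⟨h, ?_⟩
        rwa [Set.mem_preimage, prep_of_mem _ _ h]
      · rintro ⟨h1, h2⟩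
        have h1' : A i (x.val 0) = true := h1
        refine ⟨h1', ?_⟩
        rwa [← prep_of_mem]
    rw [this]
    exact (measurableSet_dom i).inter (measurable_prep i hE)
  rw [← hminv, Measure.map_apply measurable_shift hB] at h1
  refine measure_mono_null ?_ h1
  rintro x ⟨hx, rfl⟩
  have hx0 : A (x.val 0) ((shift x).val 0) = true := x.prop 0
  refine ⟨hx0, ?_⟩
  rwa [prepend_shift]

open Classical in
/-- The weights of the transfer formula. -/
noncomputable def wt (Jm : Fin N → SigmaA N A → ℝ) (i : Fin N) (γ : SigmaA N A) : ℝ≥0∞ :=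
  (dom A i).indicator (fun γ => ENNReal.ofReal ((Jm i (prep i γ))⁻¹)) γ

lemma lintegral_branch {m : Measure (SigmaA N A)} [IsProbabilityMeasure m]
    (hminv : m.map shift = m)
    {Jm : Fin N → SigmaA N A → ℝ} (hJ : IsJacobian m Jm) (hm : ∀ i, Measurable (Jm i))
    {f : SigmaA N A → ℝ≥0∞} (hf : Measurable f) :
    ∫⁻ γ, ∑ i, wt Jm i γ * f (prep i γ) ∂m = ∫⁻ x, f x ∂m := by
  have hmeas : ∀ i, Measurable fun x => ENNReal.ofReal ((Jm i x)⁻¹) :=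
    fun i => (hm i).inv.ennreal_ofReal
  have hw : ∀ i, Measurable (wt Jm i) := fun i =>
    ((hmeas i).comp (measurable_prep i)).indicator (measurableSet_dom i)
  rw [lintegral_finsetSum]
  swap
  · exact fun i _ => (hw i).mul (hf.comp (measurable_prep i))
  have key : ∀ i, ∫⁻ γ, wt Jm i γ * f (prep i γ) ∂m
      = ∫⁻ x in {x : SigmaA N A | x.val 0 = i}, f x ∂m := by
    intro i
    have e1 : ∀ γ, wt Jm i γ * f (prep i γ) = (dom A i).indicator
        (fun γ => (fun x => ENNReal.ofReal ((Jm i x)⁻¹) * f x) (prep i γ)) γ := by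
      intro γ
      by_cases h : γ ∈ dom A i <;> simp [wt, h]
    simp_rw [e1]
    rw [lintegral_indicator (measurableSet_dom i),
      ← lintegral_map (f := fun x => ENNReal.ofReal ((Jm i x)⁻¹) * f x)
        ((hmeas i).mul hf) (measurable_prep i), map_prep hJ,
      lintegral_withDensity_eq_lintegral_mul (g := fun x => ENNReal.ofReal ((Jm i x)⁻¹) * f x)
        _ (hm i).ennreal_ofReal ((hmeas i).mul hf)]
    refine lintegral_congr_ae ?_
    filter_upwards [jac_pos hminv hJ i (hm i)] with x hx
    simp only [Pi.mul_apply]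
    rw [← mul_assoc, ← ENNReal.ofReal_mul hx.le, mul_inv_cancel₀ hx.ne', ENNReal.ofReal_one,
      one_mul]
  simp_rw [key]
  rw [← lintegral_biUnion_finset]
  · have : (⋃ i ∈ (Finset.univ : Finset (Fin N)), {x : SigmaA N A | x.val 0 = i}) = univ := by
      ext x; simp
    rw [this, Measure.restrict_univ]
  · intro i _ j _ hij
    refine Set.disjoint_left.2 fun x hx hy => hij ?_
    exact hx.symm.trans hy
  · exact fun i _ => measurableSet_cyl i

lemma sum_wt {m : Measure (SigmaA N A)} [IsProbabilityMeasure m]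
    (hminv : m.map shift = m)
    {Jm : Fin N → SigmaA N A → ℝ} (hJ : IsJacobian m Jm) (hm : ∀ i, Measurable (Jm i)) :
    ∀ᵐ γ ∂m, ∑ i, wt Jm i γ = 1 := by
  have hmeas : ∀ i, Measurable fun x => ENNReal.ofReal ((Jm i x)⁻¹) :=
    fun i => (hm i).inv.ennreal_ofReal
  have hw : ∀ i, Measurable (wt Jm i) := fun i =>
    ((hmeas i).comp (measurable_prep i)).indicator (measurableSet_dom i)
  refine ae_eq_of_forall_setLIntegral_eq_of_sigmaFinite
    (Finset.measurable_fun_sum _ fun i _ => hw i) measurable_const fun B hB _ => ?_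
  have h1 := lintegral_branch hminv hJ hm
    (f := (shift ⁻¹' B).indicator fun _ => 1) (measurable_const.indicator (measurable_shift hB))
  rw [lintegral_indicator (measurable_shift hB), setLIntegral_const, one_mul,
    ← Measure.map_apply measurable_shift hB, hminv] at h1
  rw [setLIntegral_const, one_mul, ← h1, ← lintegral_indicator hB]
  refine lintegral_congr fun γ => ?_
  by_cases h : γ ∈ B
  · rw [indicator_of_mem h]
    refine Finset.sum_congr rfl fun i _ => ?_
    by_cases h2 : γ ∈ dom A i
    · rw [prep_of_mem _ _ h2, indicator_of_mem, mul_one]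
      exact h
    · simp [wt, h2]
  · rw [indicator_of_notMem h]
    symm
    refine Finset.sum_eq_zero fun i _ => ?_
    by_cases h2 : γ ∈ dom A i
    · rw [prep_of_mem _ _ h2, indicator_of_notMem, mul_zero]
      exact h
    · simp [wt, h2]

set_option linter.unusedSectionVars false

lemma lip_comp {g : K → ℝ} {f : K → K} (hg : LipschitzWith 1 g) (hf : LipschitzWith 1 f) :
    LipschitzWith 1 fun z => g (f z) := by
  have := hg.comp hf
  rw [one_mul] at this
  exact this

lemma test_integrable {g : K → ℝ} (hg : LipschitzWith 1 g ∧ ∀ z, |g z| ≤ 1) (ν : Measure K)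
    [IsFiniteMeasure ν] : Integrable g ν :=
  Integrable.of_bound hg.1.continuous.measurable.aestronglyMeasurable 1
    (Filter.Eventually.of_forall fun z => hg.2 z)

lemma wDist_self (ν : Measure K) : wDist ν ν = 0 := by simp [wDist]

lemma wDist_comm (ν₁ ν₂ : Measure K) : wDist ν₁ ν₂ = wDist ν₂ ν₁ := by
  unfold wDist
  simp_rw [abs_sub_comm]

lemma wDist_triangle (a b c : Measure K) : wDist a c ≤ wDist a b + wDist b c := by
  refine iSup_le fun g => ?_
  refine le_trans ?_ (add_le_add (le_iSup _ g) (le_iSup _ g))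
  rw [← ENNReal.ofReal_add (abs_nonneg _) (abs_nonneg _)]
  exact ENNReal.ofReal_le_ofReal (abs_sub_le _ _ _)

lemma wDist_zero_le (ν : Measure K) [IsFiniteMeasure ν] : wDist ν 0 ≤ ν univ := by
  refine iSup_le fun g => ?_
  simp only [integral_zero_measure, sub_zero]
  rw [← ENNReal.ofReal_toReal (measure_ne_top ν univ)]
  refine ENNReal.ofReal_le_ofReal ?_
  have := norm_integral_le_of_norm_le_const (μ := ν) (C := 1) (f := g.val)
    (Filter.Eventually.of_forall fun z => g.2.2 z)
  simpa [Measure.real] using this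

lemma wDist_zero (ν : Measure K) [IsFiniteMeasure ν] : wDist ν 0 = ν univ := by
  refine le_antisymm (wDist_zero_le ν) ?_
  refine le_trans ?_ (le_iSup _ ⟨fun _ => 1, LipschitzWith.const' 1, fun _ => by simp⟩)
  simp [Measure.real]

lemma wDist_sum {ι : Type*} (s : Finset ι) (a b : ι → Measure K)
    (ha : ∀ i ∈ s, IsFiniteMeasure (a i)) (hb : ∀ i ∈ s, IsFiniteMeasure (b i)) :
    wDist (∑ i ∈ s, a i) (∑ i ∈ s, b i) ≤ ∑ i ∈ s, wDist (a i) (b i) := by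
  refine iSup_le fun g => ?_
  rw [integral_finsetSum_measure, integral_finsetSum_measure, ← Finset.sum_sub_distrib]
  · refine le_trans (ENNReal.ofReal_le_ofReal (Finset.abs_sum_le_sum_abs _ _)) ?_
    rw [ENNReal.ofReal_sum_of_nonneg fun _ _ => abs_nonneg _]
    exact Finset.sum_le_sum fun i _ => le_iSup
      (fun g : {g : K → ℝ // LipschitzWith 1 g ∧ ∀ z, |g z| ≤ 1} =>
        ENNReal.ofReal |∫ z, g.val z ∂(a i) - ∫ z, g.val z ∂(b i)|) g
  · intro i hi
    have := hb i hi
    exact test_integrable g.2 _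
  · intro i hi
    have := ha i hi
    exact test_integrable g.2 _

lemma wDist_smul_le (c : ℝ≥0∞) (hc : c ≠ ⊤) (a b : Measure K) :
    wDist (c • a) (c • b) ≤ c * wDist a b := by
  refine iSup_le fun g => ?_
  refine le_trans ?_ (mul_le_mul_right (le_iSup _ g) c)
  rw [integral_smul_measure, integral_smul_measure, ← smul_sub, smul_eq_mul, abs_mul,
    ENNReal.ofReal_mul (abs_nonneg _), abs_of_nonneg ENNReal.toReal_nonneg, ENNReal.ofReal_toReal hc]

lemma wDist_map_le {f : K → K} (hf : LipschitzWith 1 f) (a b : Measure K) :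
    wDist (a.map f) (b.map f) ≤ wDist a b := by
  refine iSup_le fun g => ?_
  have hfm := hf.continuous.measurable
  have hgm : Measurable g.val := g.2.1.continuous.measurable
  rw [integral_map hfm.aemeasurable hgm.aestronglyMeasurable,
    integral_map hfm.aemeasurable hgm.aestronglyMeasurable]
  refine le_iSup (fun g : {g : K → ℝ // LipschitzWith 1 g ∧ ∀ z, |g z| ≤ 1} =>
        ENNReal.ofReal |∫ z, g.val z ∂a - ∫ z, g.val z ∂b|) ⟨fun z => g.val (f z), ?_, ?_⟩
  · exact lip_comp g.2.1 hf
  · exact fun z => g.2.2 _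

lemma wDist_map_map_le {f₁ f₂ : K → K} (h₁ : LipschitzWith 1 f₁) (h₂ : LipschitzWith 1 f₂)
    {δ : ℝ} (hδ0 : 0 ≤ δ) (hδ : ∀ z, dist (f₁ z) (f₂ z) ≤ δ) (ν : Measure K) [IsFiniteMeasure ν] :
    wDist (ν.map f₁) (ν.map f₂) ≤ ENNReal.ofReal δ * ν univ := by
  refine iSup_le fun g => ?_
  have hgm : Measurable g.val := g.2.1.continuous.measurable
  rw [integral_map h₁.continuous.measurable.aemeasurable hgm.aestronglyMeasurable,
    integral_map h₂.continuous.measurable.aemeasurable hgm.aestronglyMeasurable, ← integral_sub]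
  · have := norm_integral_le_of_norm_le_const (μ := ν) (C := δ)
      (f := fun z => g.val (f₁ z) - g.val (f₂ z)) (Filter.Eventually.of_forall fun z => by
        have := g.2.1.dist_le_mul (f₁ z) (f₂ z)
        rw [Real.norm_eq_abs, ← Real.dist_eq]
        refine this.trans ?_
        simpa using hδ z)
    rw [← ENNReal.ofReal_toReal (measure_ne_top ν univ), ← ENNReal.ofReal_mul hδ0]
    exact ENNReal.ofReal_le_ofReal this
  · exact test_integrable (g := fun z => g.val (f₁ z))
      ⟨lip_comp g.2.1 h₁, fun z => g.2.2 _⟩ ν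
  · exact test_integrable (g := fun z => g.val (f₂ z))
      ⟨lip_comp g.2.1 h₂, fun z => g.2.2 _⟩ ν

lemma wDist_smul_smul_le (a b : ℝ) (ν : Measure K) [IsFiniteMeasure ν] :
    wDist (ENNReal.ofReal a • ν) (ENNReal.ofReal b • ν) ≤ ENNReal.ofReal |a - b| * ν univ := by
  refine iSup_le fun g => ?_
  rw [integral_smul_measure, integral_smul_measure, ← sub_smul, smul_eq_mul, abs_mul,
    ENNReal.ofReal_mul (abs_nonneg _)]
  refine mul_le_mul' (ENNReal.ofReal_le_ofReal ?_) ?_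
  · rw [ENNReal.toReal_ofReal', ENNReal.toReal_ofReal']
    exact abs_max_sub_max_le_abs _ _ _
  · refine le_trans ?_ (wDist_zero_le ν)
    refine le_trans ?_ (le_iSup _ g)
    simp

lemma transferPath_eq (G : SigmaA N A × K → K) (Jm : Fin N → SigmaA N A → ℝ)
    (T : SigmaA N A → Measure K) (γ : SigmaA N A) :
    transferPath G Jm T γ =
      ∑ i, wt Jm i γ • (T (prep i γ)).map fun z => G (prep i γ, z) := by
  refine Finset.sum_congr rfl fun i _ => ?_
  by_cases h : A i (γ.val 0) = true
  · have h' : γ ∈ dom A i := h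
    rw [dif_pos h, wt, indicator_of_mem h', prep_of_mem i γ h]
  · have h' : γ ∉ dom A i := h
    rw [dif_neg h, wt, indicator_of_notMem h', zero_smul]

lemma wt_ne_top (Jm : Fin N → SigmaA N A → ℝ) (i : Fin N) (γ : SigmaA N A) :
    wt Jm i γ ≠ ⊤ := by
  by_cases h : γ ∈ dom A i <;> simp [wt, h]

lemma fib_lip {G : SigmaA N A × K → K} {α : ℝ} (hα1 : α < 1) (hG1 : CondG1 G α)
    (x : SigmaA N A) : LipschitzWith 1 fun z => G (x, z) :=
  LipschitzWith.of_dist_le_mul fun z w => by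
    refine (hG1 x z w).trans ?_
    exact mul_le_mul_of_nonneg_right (by simpa using hα1.le) dist_nonneg

lemma ae_prep {m : Measure (SigmaA N A)} {Jm : Fin N → SigmaA N A → ℝ} (hJ : IsJacobian m Jm)
    {P : SigmaA N A → Prop} (hP : ∀ᵐ x ∂m, P x) :
    ∀ᵐ γ ∂m, ∀ i, γ ∈ dom A i → P (prep i γ) := by
  rw [ae_all_iff]
  intro i
  rw [← ae_restrict_iff' (measurableSet_dom i)]
  exact (qmp_prep hJ i).ae hP

lemma ae_prep2 {m : Measure (SigmaA N A)} [IsProbabilityMeasure m]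
    {Jm : Fin N → SigmaA N A → ℝ} (hJ : IsJacobian m Jm)
    {P : SigmaA N A × SigmaA N A → Prop} (hP : ∀ᵐ p ∂(m.prod m), P p) :
    ∀ᵐ p ∂(m.prod m), ∀ i, p.1 ∈ dom A i → p.2 ∈ dom A i → P (prep i p.1, prep i p.2) := by
  rw [ae_all_iff]
  intro i
  have h1 := (MeasureTheory.QuasiMeasurePreserving.prodMap (qmp_prep hJ i) (qmp_prep hJ i)).ae hP
  rw [Measure.prod_restrict, ae_restrict_iff'
    ((measurableSet_dom i).prod (measurableSet_dom i))] at h1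
  filter_upwards [h1] with p hp h2 h3
  exact hp ⟨h2, h3⟩

lemma isFinite_sum {ι : Type*} (s : Finset ι) (a : ι → Measure K)
    (ha : ∀ i ∈ s, IsFiniteMeasure (a i)) : IsFiniteMeasure (∑ i ∈ s, a i) := by
  refine ⟨?_⟩
  rw [Measure.finsetSum_apply]
  exact ENNReal.sum_lt_top.2 fun i hi => (ha i hi).measure_univ_lt_top

/-- Each summand of the transfer formula is finite. -/
lemma term_finite (G : SigmaA N A × K → K) (Jm : Fin N → SigmaA N A → ℝ)
    (T : SigmaA N A → Measure K) (γ : SigmaA N A) (i : Fin N)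
    (h : γ ∈ dom A i → IsFiniteMeasure (T (prep i γ))) :
    IsFiniteMeasure (wt Jm i γ • (T (prep i γ)).map fun z => G (prep i γ, z)) := by
  by_cases hi : γ ∈ dom A i
  · have := h hi
    exact Measure.smul_finite _ (wt_ne_top Jm i γ)
  · have : wt Jm i γ = 0 := by simp [wt, hi]
    rw [this, zero_smul]; infer_instance

lemma finite_step {m : Measure (SigmaA N A)} {Jm : Fin N → SigmaA N A → ℝ}
    (hJ : IsJacobian m Jm) (G : SigmaA N A × K → K)
    {T : SigmaA N A → Measure K} (hT : ∀ᵐ x ∂m, IsFiniteMeasure (T x)) :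
    ∀ᵐ x ∂m, IsFiniteMeasure (transferPath G Jm T x) := by
  filter_upwards [ae_prep hJ hT] with γ hγ
  rw [transferPath_eq]
  exact isFinite_sum _ _ fun i _ => term_finite G Jm T γ i (hγ i)

/-- the sup norm of a path -/
noncomputable def supT (m : Measure (SigmaA N A)) (T : SigmaA N A → Measure K) : ℝ≥0∞ :=
  essSup (fun γ => wDist (T γ) 0) m

lemma ae_mass_le {m : Measure (SigmaA N A)} {T : SigmaA N A → Measure K}
    (hT : ∀ᵐ x ∂m, IsFiniteMeasure (T x)) : ∀ᵐ x ∂m, T x univ ≤ supT m T := by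
  filter_upwards [hT, ENNReal.ae_le_essSup (μ := m) fun γ => wDist (T γ) 0] with x hx h
  rwa [wDist_zero] at h

lemma mass_step {m : Measure (SigmaA N A)} [IsProbabilityMeasure m]
    (hminv : m.map shift = m) {Jm : Fin N → SigmaA N A → ℝ}
    (hJ : IsJacobian m Jm) (hm : ∀ i, Measurable (Jm i))
    {G : SigmaA N A × K → K} {α : ℝ} (hα1 : α < 1) (hG1 : CondG1 G α)
    {T : SigmaA N A → Measure K} (hT : ∀ᵐ x ∂m, IsFiniteMeasure (T x)) :
    ∀ᵐ x ∂m, transferPath G Jm T x univ ≤ supT m T := by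
  filter_upwards [ae_prep hJ (ae_mass_le hT), sum_wt hminv hJ hm] with γ hγ hs
  rw [transferPath_eq, Measure.finsetSum_apply]
  calc _ ≤ ∑ i, wt Jm i γ * supT m T := by
        refine Finset.sum_le_sum fun i _ => ?_
        rw [Measure.smul_apply, smul_eq_mul,
          Measure.map_apply (fib_lip hα1 hG1 _).continuous.measurable MeasurableSet.univ,
          preimage_univ]
        by_cases hi : γ ∈ dom A i
        · exact mul_le_mul_right (hγ i hi) _
        · simp [wt, hi]
    _ = supT m T := by rw [← Finset.sum_mul, hs, one_mul]

lemma supT_step {m : Measure (SigmaA N A)} [IsProbabilityMeasure m]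
    (hminv : m.map shift = m) {Jm : Fin N → SigmaA N A → ℝ}
    (hJ : IsJacobian m Jm) (hm : ∀ i, Measurable (Jm i))
    {G : SigmaA N A × K → K} {α : ℝ} (hα1 : α < 1) (hG1 : CondG1 G α)
    {T : SigmaA N A → Measure K} (hT : ∀ᵐ x ∂m, IsFiniteMeasure (T x)) :
    supT m (transferPath G Jm T) ≤ supT m T := by
  refine essSup_le_of_ae_le _ ?_
  filter_upwards [mass_step hminv hJ hm hα1 hG1 hT, finite_step hJ G hT] with x h1 h2
  exact (wDist_zero_le _).trans h1

lemma pathLip_ae {m : Measure (SigmaA N A)} {θ : ℝ} (h0 : 0 < θ) (h1 : θ < 1)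
    (T : SigmaA N A → Measure K) :
    ∀ᵐ p ∂(m.prod m), wDist (T p.1) (T p.2) ≤
      pathLip m θ T * ENNReal.ofReal (dTheta θ p.1 p.2) := by
  filter_upwards [ENNReal.ae_le_essSup (μ := m.prod m) fun p : SigmaA N A × SigmaA N A =>
    wDist (T p.1) (T p.2) / ENNReal.ofReal (dTheta θ p.1 p.2)] with p hp
  by_cases h : p.1 = p.2
  · rw [h, wDist_self]; exact zero_le
  · have := dTheta_pos h0 h1 h
    rwa [ENNReal.div_le_iff (by simpa using this) ENNReal.ofReal_ne_top] at hp

lemma lip_step {m : Measure (SigmaA N A)} [IsProbabilityMeasure m]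
    (hminv : m.map shift = m) {θ : ℝ} (h0 : 0 < θ) (h1 : θ < 1) {Jm : Fin N → SigmaA N A → ℝ}
    (hJ : IsJacobian m Jm) (hm : ∀ i, Measurable (Jm i))
    {G : SigmaA N A × K → K} {α : ℝ} (hα1 : α < 1) (hG1 : CondG1 G α)
    {H : ℝ} (hG2 : CondG2 θ G H)
    {gLip : ℝ} (hgLip : ∀ i : Fin N, LipWithD (dTheta θ) gLip fun x => (Jm i x)⁻¹)
    {T : SigmaA N A → Measure K} (hT : ∀ᵐ x ∂m, IsFiniteMeasure (T x)) :
    pathLip m θ (transferPath G Jm T) ≤ ENNReal.ofReal θ * pathLip m θ T +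
      ENNReal.ofReal (max (H * θ + θ * (N : ℝ) * gLip) 2) * supT m T := by
  have q1 := Measure.quasiMeasurePreserving_fst (μ := m) (ν := m)
  have q2 := Measure.quasiMeasurePreserving_snd (μ := m) (ν := m)
  have a1 := finite_step hJ G hT
  have a2 := mass_step hminv hJ hm hα1 hG1 hT
  have a3 := ae_prep hJ hT
  have a4 := ae_prep hJ (ae_mass_le hT)
  have a5 := sum_wt hminv hJ hm
  refine essSup_le_of_ae_le _ ?_
  filter_upwards [ae_prep2 hJ (pathLip_ae h0 h1 T), q1.ae a1, q2.ae a1, q1.ae a2, q2.ae a2,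
    q1.ae a3, q2.ae a3, q2.ae a4, q1.ae a5] with p hL f1 f2 s1 s2 t1 t2 u2 w1
  obtain ⟨x, y⟩ := p
  simp only at hL f1 f2 s1 s2 t1 t2 u2 w1 ⊢
  by_cases hxy : x = y
  · rw [hxy, wDist_self, ENNReal.zero_div]; exact zero_le
  have hd := dTheta_pos h0 h1 hxy
  have hH : 0 ≤ H := by
    have := dist_nonneg.trans (hG2 (Classical.arbitrary K) x y)
    exact nonneg_of_mul_nonneg_left this hd
  rw [ENNReal.div_le_iff (by simpa using hd) ENNReal.ofReal_ne_top]
  set S := supT m T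
  set d := dTheta θ x y with hd_def
  by_cases hsym : x.val 0 = y.val 0
  · -- same first symbol
    have hg : ∀ i : Fin N, 0 ≤ gLip := fun i => by
      have := (abs_nonneg _).trans (hgLip i x y)
      exact nonneg_of_mul_nonneg_left this hd
    rw [transferPath_eq, transferPath_eq]
    refine (wDist_sum _ _ _ (fun i _ => term_finite G Jm T x i (t1 i))
      (fun i _ => term_finite G Jm T y i (t2 i))).trans ?_
    have term : ∀ i, wDist (wt Jm i x • (T (prep i x)).map fun z => G (prep i x, z))
        (wt Jm i y • (T (prep i y)).map fun z => G (prep i y, z)) ≤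
        wt Jm i x * (pathLip m θ T * ENNReal.ofReal (θ * d) + ENNReal.ofReal (H * (θ * d)) * S)
          + ENNReal.ofReal (gLip * (θ * d)) * S := by
      intro i
      by_cases hx : A i (x.val 0) = true
      swap
      · have hx' : x ∉ dom A i := hx
        have hy' : y ∉ dom A i := fun h => hx (by rw [hsym]; exact h)
        simp [wt, hx', hy', wDist_self]
      have hy : A i (y.val 0) = true := hsym ▸ hx
      have hx' : x ∈ dom A i := hx
      have hy' : y ∈ dom A i := hy
      have hdp : dTheta θ (prep i x) (prep i y) = θ * d := by
        rw [prep_of_mem i x hx, prep_of_mem i y hy, dTheta_prepend h0 h1]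
      have fT := t2 i hy'
      have mT := u2 i hy'
      have l1 := fib_lip hα1 hG1 (prep i x)
      have l2 := fib_lip hα1 hG1 (prep i y)
      have b1 : wDist (wt Jm i x • (T (prep i x)).map fun z => G (prep i x, z))
          (wt Jm i x • (T (prep i y)).map fun z => G (prep i x, z)) ≤
          wt Jm i x * (pathLip m θ T * ENNReal.ofReal (θ * d)) := by
        refine (wDist_smul_le _ (wt_ne_top _ _ _) _ _).trans (mul_le_mul_right ?_ _)
        refine (wDist_map_le l1 _ _).trans ?_
        have := hL i hx' hy'
        rwa [hdp] at this
      have b2 : wDist (wt Jm i x • (T (prep i y)).map fun z => G (prep i x, z))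
          (wt Jm i x • (T (prep i y)).map fun z => G (prep i y, z)) ≤
          wt Jm i x * (ENNReal.ofReal (H * (θ * d)) * S) := by
        refine (wDist_smul_le _ (wt_ne_top _ _ _) _ _).trans (mul_le_mul_right ?_ _)
        refine (wDist_map_map_le l1 l2 (δ := H * (θ * d)) (by positivity) (fun z => ?_) _).trans
          (mul_le_mul_right mT _)
        rw [← hdp]
        exact hG2 z _ _
      have b3 : wDist (wt Jm i x • (T (prep i y)).map fun z => G (prep i y, z))
          (wt Jm i y • (T (prep i y)).map fun z => G (prep i y, z)) ≤
          ENNReal.ofReal (gLip * (θ * d)) * S := by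
        rw [wt, wt, indicator_of_mem hx', indicator_of_mem hy']
        refine (wDist_smul_smul_le _ _ _).trans (mul_le_mul' (ENNReal.ofReal_le_ofReal ?_) ?_)
        · rw [← hdp]; exact hgLip i _ _
        · rw [Measure.map_apply l2.continuous.measurable MeasurableSet.univ, preimage_univ]
          exact mT
      have b4 := (wDist_triangle _ _ _).trans (add_le_add b1 b2)
      have b5 := (wDist_triangle _ _ _).trans (add_le_add b4 b3)
      rwa [mul_add]
    refine (Finset.sum_le_sum fun i _ => term i).trans ?_
    rw [Finset.sum_add_distrib, ← Finset.sum_mul, w1, one_mul, Finset.sum_const,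
      Finset.card_univ, Fintype.card_fin, nsmul_eq_mul]
    have hg0 := hg (x.val 0)
    have e1 : ENNReal.ofReal (H * (θ * d)) * S + (N : ℝ≥0∞) * (ENNReal.ofReal (gLip * (θ * d)) * S)
        = ENNReal.ofReal (H * θ + θ * (N : ℝ) * gLip) * S * ENNReal.ofReal d := by
      rw [← mul_assoc (N : ℝ≥0∞), ← add_mul, ← ENNReal.ofReal_natCast N,
        ← ENNReal.ofReal_mul (by positivity), ← ENNReal.ofReal_add (by positivity) (by positivity),
        mul_right_comm, ← ENNReal.ofReal_mul (by positivity)]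
      congr 2
      ring
    rw [add_assoc, e1, add_mul, ENNReal.ofReal_mul h0.le, ← mul_assoc,
      mul_comm (pathLip m θ T)]
    gcongr
    exact le_max_left _ _
  · have hd1 : 1 ≤ d := dTheta_ge_one h0 h1 hsym
    calc wDist (transferPath G Jm T x) (transferPath G Jm T y)
        ≤ wDist (transferPath G Jm T x) 0 + wDist 0 (transferPath G Jm T y) :=
          wDist_triangle _ _ _
      _ ≤ S + S := by
          rw [wDist_comm 0]
          exact add_le_add ((wDist_zero_le _).trans s1) ((wDist_zero_le _).trans s2)
      _ = ENNReal.ofReal 2 * S := by rw [← two_mul]; simp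
      _ ≤ ENNReal.ofReal (max (H * θ + θ * (N : ℝ) * gLip) 2) * S :=
          mul_le_mul_left (ENNReal.ofReal_le_ofReal (le_max_right _ _)) _
      _ ≤ _ := le_add_self
      _ ≤ _ := le_mul_of_one_le_right zero_le (by simpa using ENNReal.ofReal_le_ofReal hd1)

lemma iter_bound {m : Measure (SigmaA N A)} [IsProbabilityMeasure m]
    (hminv : m.map shift = m) {θ : ℝ} (h0 : 0 < θ) (h1 : θ < 1) {Jm : Fin N → SigmaA N A → ℝ}
    (hJ : IsJacobian m Jm) (hm : ∀ i, Measurable (Jm i))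
    {G : SigmaA N A × K → K} {α : ℝ} (hα1 : α < 1) (hG1 : CondG1 G α)
    {H : ℝ} (hG2 : CondG2 θ G H)
    {gLip : ℝ} (hgLip : ∀ i : Fin N, LipWithD (dTheta θ) gLip fun x => (Jm i x)⁻¹)
    {T : SigmaA N A → Measure K} (hT : ∀ᵐ x ∂m, IsFiniteMeasure (T x)) (n : ℕ) :
    (∀ᵐ x ∂m, IsFiniteMeasure ((transferPath G Jm)^[n] T x)) ∧
    supT m ((transferPath G Jm)^[n] T) ≤ supT m T ∧
    pathLip m θ ((transferPath G Jm)^[n] T) ≤ ENNReal.ofReal (θ ^ n) * pathLip m θ T +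
      ENNReal.ofReal (max (H * θ + θ * (N : ℝ) * gLip) 2 / (1 - θ)) * supT m T := by
  induction n with
  | zero => exact ⟨hT, le_rfl, by simp⟩
  | succ n ih =>
    obtain ⟨i1, i2, i3⟩ := ih
    rw [Function.iterate_succ_apply']
    refine ⟨finite_step hJ G i1, (supT_step hminv hJ hm hα1 hG1 i1).trans i2, ?_⟩
    refine (lip_step hminv h0 h1 hJ hm hα1 hG1 hG2 hgLip i1).trans ?_
    set C := max (H * θ + θ * (N : ℝ) * gLip) 2
    have hC : 0 ≤ C := le_trans (by norm_num) (le_max_right _ _)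
    have h3 : 0 < 1 - θ := by linarith
    refine (add_le_add (mul_le_mul_right i3 _) (mul_le_mul_right i2 _)).trans_eq ?_
    rw [mul_add, add_assoc, ← mul_assoc, ← mul_assoc, ← add_mul, ← ENNReal.ofReal_mul h0.le,
      ← ENNReal.ofReal_mul h0.le, ← ENNReal.ofReal_add (by positivity) hC]
    congr 2
    · rw [pow_succ']
    · congr 1
      field_simp
      ring

lemma disint_finite {m : Measure (SigmaA N A)} {μ : Measure (SigmaA N A × K)} [IsFiniteMeasure μ]
    {T : SigmaA N A → Measure K} (hT : IsDisint m μ T) : ∀ᵐ x ∂m, IsFiniteMeasure (T x) := by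
  have h := hT.1 univ MeasurableSet.univ
  have h2 : ∫⁻ γ, T γ univ ∂m ≠ ⊤ := by
    have : ∫⁻ γ, T γ univ ∂m = μ univ := by rw [h]; simp
    rw [this]; exact measure_ne_top _ _
  filter_upwards [ae_lt_top (hT.2 univ MeasurableSet.univ) h2] with x hx
  exact ⟨hx⟩

lemma measurable_section {T : SigmaA N A → Measure K} (hf : ∀ x, IsFiniteMeasure (T x))
    (hT : ∀ E : Set K, MeasurableSet E → Measurable fun γ => T γ E)
    {E : Set (SigmaA N A × K)} (hE : MeasurableSet E) :
    Measurable fun γ => T γ {z | (γ, z) ∈ E} := by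
  let κ : ProbabilityTheory.Kernel (SigmaA N A) K :=
    ⟨T, Measure.measurable_of_measurable_coe _ hT⟩
  exact ProbabilityTheory.Kernel.measurable_kernel_prodMk_left_of_finite (κ := κ) hE hf

lemma measurable_G {G : SigmaA N A × K → K} (hGm : Measurable (skew G)) : Measurable G :=
  measurable_snd.comp hGm

lemma disint_step {m : Measure (SigmaA N A)} [IsProbabilityMeasure m]
    (hminv : m.map shift = m) {Jm : Fin N → SigmaA N A → ℝ}
    (hJ : IsJacobian m Jm) (hm : ∀ i, Measurable (Jm i))
    {G : SigmaA N A × K → K} (hGm : Measurable (skew G))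
    {μ : Measure (SigmaA N A × K)}
    {T : SigmaA N A → Measure K} (hf : ∀ x, IsFiniteMeasure (T x)) (hT : IsDisint m μ T) :
    (∀ x, IsFiniteMeasure (transferPath G Jm T x)) ∧
      IsDisint m (μ.map (skew G)) (transferPath G Jm T) := by
  have hG := measurable_G hGm
  have hGx : ∀ x, Measurable fun z => G (x, z) := fun x => hG.comp measurable_prodMk_left
  refine ⟨fun x => ?_, fun E hE => ?_, fun E hE => ?_⟩
  · rw [transferPath_eq]
    exact isFinite_sum _ _ fun i _ => term_finite G Jm T x i fun _ => hf _
  · rw [Measure.map_apply hGm hE, hT.1 _ (hGm hE),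
      ← lintegral_branch hminv hJ hm (measurable_section hf hT.2 (hGm hE))]
    refine lintegral_congr fun γ => ?_
    rw [transferPath_eq, Measure.finsetSum_apply]
    refine Finset.sum_congr rfl fun i _ => ?_
    have hs : MeasurableSet {z | (γ, z) ∈ E} := measurable_prodMk_left hE
    rw [Measure.smul_apply, smul_eq_mul, Measure.map_apply (hGx _) hs]
    by_cases hi : γ ∈ dom A i
    · congr 2
      ext z
      have : shift (prep i γ) = γ := by rw [prep_of_mem i γ hi]; exact shift_prepend _ _ _
      simp [skew, this]
    · simp [wt, hi]
  · have hw : ∀ i, Measurable (wt Jm i) := fun i =>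
      (((hm i).inv.ennreal_ofReal).comp (measurable_prep i)).indicator (measurableSet_dom i)
    have : (fun γ => transferPath G Jm T γ E) = fun γ => ∑ i, wt Jm i γ *
        (fun x => T x {z | (x, z) ∈ G ⁻¹' E}) (prep i γ) := by
      funext γ
      rw [transferPath_eq, Measure.finsetSum_apply]
      refine Finset.sum_congr rfl fun i _ => ?_
      rw [Measure.smul_apply, smul_eq_mul, Measure.map_apply (hGx _) hE]
      rfl
    rw [this]
    exact Finset.measurable_fun_sum _ fun i _ => (hw i).mul
      ((measurable_section hf hT.2 (hG hE)).comp (measurable_prep i))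

lemma disint_iter {m : Measure (SigmaA N A)} [IsProbabilityMeasure m]
    (hminv : m.map shift = m) {Jm : Fin N → SigmaA N A → ℝ}
    (hJ : IsJacobian m Jm) (hm : ∀ i, Measurable (Jm i))
    {G : SigmaA N A × K → K} (hGm : Measurable (skew G))
    {μ : Measure (SigmaA N A × K)}
    {T : SigmaA N A → Measure K} (hf : ∀ x, IsFiniteMeasure (T x)) (hT : IsDisint m μ T) (n : ℕ) :
    (∀ x, IsFiniteMeasure ((transferPath G Jm)^[n] T x)) ∧
      IsDisint m ((fun ν : Measure (SigmaA N A × K) => ν.map (skew G))^[n] μ)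
        ((transferPath G Jm)^[n] T) := by
  induction n with
  | zero => exact ⟨hf, hT⟩
  | succ n ih =>
    rw [Function.iterate_succ_apply', Function.iterate_succ_apply']
    exact disint_step hminv hJ hm hGm ih.1 ih.2

open Classical in
/-- Everywhere finite version of a path. -/
noncomputable def fin (T : SigmaA N A → Measure K) (γ : SigmaA N A) : Measure K :=
  if T γ univ < ⊤ then T γ else 0

lemma fin_finite (T : SigmaA N A → Measure K) (γ : SigmaA N A) : IsFiniteMeasure (fin T γ) := by
  unfold fin
  split_ifs with h
  · exact ⟨h⟩
  · infer_instance

lemma fin_ae {m : Measure (SigmaA N A)} {T : SigmaA N A → Measure K}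
    (hT : ∀ᵐ x ∂m, IsFiniteMeasure (T x)) : ∀ᵐ x ∂m, fin T x = T x := by
  filter_upwards [hT] with x hx
  simp [fin]

lemma fin_disint {m : Measure (SigmaA N A)} {μ : Measure (SigmaA N A × K)} [IsFiniteMeasure μ]
    {T : SigmaA N A → Measure K} (hT : IsDisint m μ T) : IsDisint m μ (fin T) := by
  classical
  refine ⟨fun E hE => ?_, fun E hE => ?_⟩
  · rw [hT.1 E hE]
    refine lintegral_congr_ae ?_
    filter_upwards [fin_ae (disint_finite hT)] with x hx
    rw [hx]
  · have : (fun γ => fin T γ E) = fun γ => if T γ univ < ⊤ then T γ E else 0 := by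
      funext γ
      unfold fin
      split_ifs <;> simp
    rw [this]
    exact Measurable.ite (hT.2 univ MeasurableSet.univ measurableSet_Iio) (hT.2 E hE)
      measurable_const

lemma supT_fiberR {m : Measure (SigmaA N A)} [IsProbabilityMeasure m]
    {μ : Measure (SigmaA N A × K)} [h : IsFiniteMeasure μ]
    {T : SigmaA N A → Measure K} (hT : IsDisint m μ T) :
    supT m T = essSup (fun γ => wDist (fiberR m μ γ) 0) m := by
  refine essSup_congr_ae ?_
  have hd : μ.fst = m.withDensity fun γ => T γ univ := by
    ext E hE
    rw [Measure.fst_apply hE, hT.1 _ (measurable_fst hE), withDensity_apply _ hE,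
      ← lintegral_indicator hE]
    refine lintegral_congr fun γ => ?_
    by_cases hγ : γ ∈ E
    · simp [hγ]
    · simp [hγ]
  have h2 : μ.fst.rnDeriv m =ᵐ[m] fun γ => T γ univ := by
    rw [hd]
    exact Measure.rnDeriv_withDensity _ (hT.2 univ MeasurableSet.univ)
  filter_upwards [disint_finite hT, h2] with γ h3 h4
  have h5 : fiberR m μ γ = T γ univ • μ.condKernel γ := by
    rw [fiberR, dif_pos h, h4]
  have : IsFiniteMeasure (T γ univ • μ.condKernel γ) :=
    Measure.smul_finite _ (measure_ne_top _ _)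
  rw [h5, wDist_zero, wDist_zero]
  simp

lemma measurable_J {θ : ℝ} (h0 : 0 < θ) (h1 : θ < 1) {Jm : Fin N → SigmaA N A → ℝ}
    {gLip : ℝ} (hgLip : ∀ i : Fin N, LipWithD (dTheta θ) gLip fun x => (Jm i x)⁻¹) (i : Fin N) :
    Measurable (Jm i) := by
  have : Measurable fun x => ((Jm i x)⁻¹)⁻¹ := (lip_measurable h0 h1 (hgLip i)).inv
  simpa only [inv_inv] using this

lemma lipDisint_le {m : Measure (SigmaA N A)} {θ : ℝ} {μ : Measure (SigmaA N A × K)}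
    {T : SigmaA N A → Measure K} (hT : IsDisint m μ T) : lipDisint m θ μ ≤ pathLip m θ T :=
  iInf_le (fun T : {T : SigmaA N A → Measure K // IsDisint m μ T} => pathLip m θ T.val) ⟨T, hT⟩

/-- Under (G1) and (G2), iterating the transfer formula:
`|Γ^ω_{F^{*n}μ}|_θ^ω ≤ θ^n |μ|_θ^ω + (C₁/(1-θ)) ‖μ‖_∞` for all `n ≥ 1`;
consequently `|F^{*n}μ|_θ ≤ θ^n |μ|_θ + (C₁/(1-θ)) ‖μ‖_∞`. -/
theorem transfer_path_lipschitz_bound_iterated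
    (N : ℕ) (A : Fin N → Fin N → Bool) (hA : Aperiodic A)
    (θ : ℝ) (hθ0 : 0 < θ) (hθ1 : θ < 1)
    (m : Measure (SigmaA N A)) [IsProbabilityMeasure m]
    (hmM : IsMarkov m) (hminv : m.map shift = m)
    {K : Type*} [MetricSpace K] [CompactSpace K] [Nonempty K]
    [MeasurableSpace K] [BorelSpace K]
    (hdiam : Metric.diam (Set.univ : Set K) = 1)
    (G : SigmaA N A × K → K) (hGm : Measurable (skew G))
    (α : ℝ) (hα0 : 0 < α) (hα1 : α < 1) (hG1 : CondG1 G α)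
    (H : ℝ) (hG2 : CondG2 θ G H)
    (Jm : Fin N → SigmaA N A → ℝ) (hJ : IsJacobian m Jm)
    (gLip : ℝ) (hgLip : ∀ i : Fin N, LipWithD (dTheta θ) gLip fun x => (Jm i x)⁻¹)
    (μ : Measure (SigmaA N A × K)) [IsFiniteMeasure μ]
    (hAC : μ.fst ≪ m) (hLtheta : lipDisint m θ μ < ⊤)
    (T : SigmaA N A → Measure K) (hT : IsDisint m μ T) :
    (∀ n : ℕ, 1 ≤ n →
      pathLip m θ ((transferPath G Jm)^[n] T) ≤
        ENNReal.ofReal (θ ^ n) * pathLip m θ T +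
          ENNReal.ofReal (max (H * θ + θ * (N : ℝ) * gLip) 2 / (1 - θ)) *
            essSup (fun γ => wDist (T γ) 0) m) ∧
    (∀ n : ℕ, 1 ≤ n →
      lipDisint m θ ((fun ν : Measure (SigmaA N A × K) => ν.map (skew G))^[n] μ) ≤
        ENNReal.ofReal (θ ^ n) * lipDisint m θ μ +
          ENNReal.ofReal (max (H * θ + θ * (N : ℝ) * gLip) 2 / (1 - θ)) *
            essSup (fun γ => wDist (fiberR m μ γ) 0) m) := by
  have hm := measurable_J hθ0 hθ1 hgLip
  constructor
  · intro n _
    exact (iter_bound hminv hθ0 hθ1 hJ hm hα1 hG1 hG2 hgLip (disint_finite hT) n).2.2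
  · intro n _
    rw [← supT_fiberR hT]
    have key : ∀ T' : {T : SigmaA N A → Measure K // IsDisint m μ T},
        lipDisint m θ ((fun ν : Measure (SigmaA N A × K) => ν.map (skew G))^[n] μ) ≤
        ENNReal.ofReal (θ ^ n) * pathLip m θ T'.val +
          ENNReal.ofReal (max (H * θ + θ * (N : ℝ) * gLip) 2 / (1 - θ)) * supT m T := by
      rintro ⟨S, hS⟩
      have hfS := fin_disint hS
      have hae := fin_ae (disint_finite hS)
      have hb := (iter_bound hminv hθ0 hθ1 hJ hm hα1 hG1 hG2 hgLip (disint_finite hfS) n).2.2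
      have hdis := (disint_iter hminv hJ hm hGm (fin_finite S) hfS n).2
      have e1 : supT m (fin S) = supT m T := by rw [supT_fiberR hfS, supT_fiberR hT]
      have e2 : pathLip m θ (fin S) = pathLip m θ S := by
        refine essSup_congr_ae ?_
        filter_upwards [(Measure.quasiMeasurePreserving_fst (μ := m) (ν := m)).ae hae,
          (Measure.quasiMeasurePreserving_snd (μ := m) (ν := m)).ae hae] with p h1 h2
        rw [h1, h2]
      rw [e1, e2] at hb
      exact (lipDisint_le hdis).trans hb
    have hθn : ENNReal.ofReal (θ ^ n) ≠ 0 := by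
      simpa using pow_pos hθ0 n
    have : Nonempty {T : SigmaA N A → Measure K // IsDisint m μ T} := ⟨⟨T, hT⟩⟩
    conv_rhs => rw [lipDisint]
    rw [ENNReal.mul_iInf_of_ne hθn ENNReal.ofReal_ne_top, ENNReal.iInf_add]
    exact le_iInf key

end RDS
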